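/- Let λ ∈ Λ_I⁺, let β ∈ Φ \ Φ_λ, and let γ ∈ Φ_{β,2}. Then s_γλ is Φ_I-regular if and only if s_γ(λ|_{Φ_{β,2}}) is (Φ_I ∩ Φ_{β,2})-regular. -/

import Mathlib

open scoped RealInnerProductSpace
open Classical

noncomputable section

namespace JantzenGVM

variable {V : Type*} [NormedAddCommGroup V] [InnerProductSpace ℝ V] [FiniteDimensional ℝ V]

/-- The coroot `α^∨ = 2α/⟨α,α⟩` of a vector `α` (junk value `0` when `α = 0`). -/
def coroot (α : V) : V := (2 / ⟪α, α⟫) • α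

/-- The linear functional `v ↦ ⟨v, α^∨⟩`. -/
def corootForm (α : V) : V →ₗ[ℝ] ℝ where
  toFun v := ⟪v, coroot α⟫
  map_add' x y := by simp [inner_add_left]
  map_smul' c x := by simp [inner_smul_left]

lemma corootForm_self {α : V} (h : ⟪α, α⟫ ≠ 0) : corootForm α α = 2 := by
  simp only [corootForm, coroot, LinearMap.coe_mk, AddHom.coe_mk, real_inner_smul_right]
  field_simp

/-- The reflection `s_α` as a linear automorphism of `V` (the identity when `⟨α,α⟩ = 0`). -/
def reflV (α : V) : V ≃ₗ[ℝ] V :=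
  if h : ⟪α, α⟫ = 0 then LinearEquiv.refl ℝ V
  else Module.reflection (corootForm_self h)

/-- `h* = ℂ ⊗ V`, realized as the space of real-linear functionals `V → ℂ` via the
inner product; an element `λ` pairs with a root `α` by `⟨λ, α⟩ = λ α` and with the
coroot by `⟨λ, α^∨⟩ = λ (coroot α)`. -/
abbrev HStar (V : Type*) [NormedAddCommGroup V] [InnerProductSpace ℝ V] := V →ₗ[ℝ] ℂ

/-- The canonical embedding of `V` into `h*`. -/
def emb (α : V) : HStar V where
  toFun v := (⟪α, v⟫ : ℂ)
  map_add' x y := by simp [inner_add_right]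
  map_smul' c x := by simp [inner_smul_right, Complex.real_smul]

/-- The action of a linear automorphism `w` of `V` on `h*`: `(w • λ)(v) = λ(w⁻¹ v)`. -/
def wAct (w : V ≃ₗ[ℝ] V) (l : HStar V) : HStar V := l ∘ₗ (w.symm : V →ₗ[ℝ] V)

/-- The reflection `s_β λ = λ - ⟨λ, β^∨⟩ β` acting on `h*`. -/
def sRefl (β : V) (l : HStar V) : HStar V := l - l (coroot β) • emb β

/-- The group generated by the reflections in the elements of `Φ'`. -/
def weyl (Φ' : Set V) : Subgroup (V ≃ₗ[ℝ] V) :=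
  Subgroup.closure {w | ∃ α ∈ Φ', w = reflV α}

/-- A finite, reduced, crystallographic root system spanning the Euclidean space `V`,
together with a choice of positive system and the corresponding simple system. -/
structure RootSys (V : Type*) [NormedAddCommGroup V] [InnerProductSpace ℝ V]
    [FiniteDimensional ℝ V] where
  Φ : Finset V
  pos : Finset V
  Δ : Finset V
  ne_zero : ∀ α ∈ Φ, α ≠ (0 : V)
  span_eq_top : Submodule.span ℝ (Φ : Set V) = ⊤
  reduced : ∀ α ∈ Φ, ∀ c : ℝ, c • α ∈ Φ → c = 1 ∨ c = -1
  refl_mem : ∀ α ∈ Φ, ∀ β ∈ Φ, reflV α β ∈ Φ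
  crystallographic : ∀ α ∈ Φ, ∀ β ∈ Φ, ∃ n : ℤ, ⟪β, coroot α⟫ = (n : ℝ)
  pos_subset : pos ⊆ Φ
  mem_pos_or : ∀ α ∈ Φ, α ∈ pos ∨ -α ∈ pos
  not_both : ∀ α ∈ pos, -α ∉ pos
  simple_subset : Δ ⊆ pos
  simple_indep : LinearIndependent ℝ (fun x : {a : V // a ∈ Δ} => x.1)
  simple_gen : ∀ β ∈ pos, ∃ c : V → ℝ, (∀ α ∈ Δ, 0 ≤ c α) ∧ β = ∑ α ∈ Δ, c α • α

/-- A subsystem of the root system: a subset of `Φ` closed under its own reflections. -/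
def IsSubsystem (S : RootSys V) (Φ' : Set V) : Prop :=
  Φ' ⊆ (S.Φ : Set V) ∧ ∀ α ∈ Φ', ∀ β ∈ Φ', reflV α β ∈ Φ'

/-- The length of `w`, i.e. the number of positive roots sent to negative roots
(this equals the Coxeter length for elements of the Weyl group). -/
def len (S : RootSys V) (w : V ≃ₗ[ℝ] V) : ℕ :=
  {β ∈ (S.pos : Set V) | w β ∉ (S.pos : Set V)}.ncard

/-- `Φ_I = ℤI ∩ Φ`, the subsystem generated by a subset `I` of the simple roots. -/
def PhiI (S : RootSys V) (I : Finset V) : Set V :=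
  {α ∈ (S.Φ : Set V) | α ∈ Submodule.span ℤ (I : Set V)}

/-- `z` is a positive integer. -/
def IsPosInt (z : ℂ) : Prop := ∃ n : ℤ, 0 < n ∧ z = (n : ℂ)

/-- `z` is an integer. -/
def IsInt (z : ℂ) : Prop := ∃ n : ℤ, z = (n : ℂ)

/-- `Λ_I⁺ = {λ ∈ h* : ⟨λ, α^∨⟩ ∈ ℤ_{>0} for all α ∈ I}`. -/
def LambdaP (I : Set V) : Set (HStar V) :=
  {l | ∀ α ∈ I, IsPosInt (l (coroot α))}

/-- `Λ⁺(Φ'', Φ') = {ν ∈ ℂΦ' : ⟨ν, α^∨⟩ ∈ ℤ_{>0} for all α ∈ Φ'' ∩ Φ⁺}`. -/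
def LambdaPSub (S : RootSys V) (Φ'' Φ' : Set V) : Set (HStar V) :=
  {l | l ∈ Submodule.span ℂ (emb '' Φ') ∧
       ∀ α ∈ Φ'' ∩ (S.pos : Set V), IsPosInt (l (coroot α))}

/-- `λ` is `Φ''`-regular: `⟨λ, α⟩ ≠ 0` for all `α ∈ Φ''`. -/
def IsRegularOn (Φ'' : Set V) (l : HStar V) : Prop := ∀ α ∈ Φ'', l α ≠ 0

/-- `Ψ⁺(λ, Φ'', Φ') = {β ∈ (Φ' ∩ Φ⁺) \ Φ'' : ⟨λ, β^∨⟩ ∈ ℤ_{>0}}`. -/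
def PsiP (S : RootSys V) (Φ'' Φ' : Set V) (l : HStar V) : Set V :=
  {β | β ∈ Φ' ∩ (S.pos : Set V) ∧ β ∉ Φ'' ∧ IsPosInt (l (coroot β))}

/-- `Ψ⁺⁺(λ, Φ'', Φ') = {β ∈ Ψ⁺(λ, Φ'', Φ') : s_β λ is Φ''-regular}`. -/
def PsiPP (S : RootSys V) (Φ'' Φ' : Set V) (l : HStar V) : Set V :=
  {β ∈ PsiP S Φ'' Φ' l | ∀ α ∈ Φ'', (sRefl β l) α ≠ 0}

/-- The sign function: `sgn(λ, μ) = (-1)^{ℓ(w)}` if `λ, μ` are `Φ''`-regular and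
`μ = wλ` for some `w ∈ W(Φ'')`, and `0` otherwise. -/
def sgnW (S : RootSys V) (Φ'' : Set V) (l m : HStar V) : ℤ :=
  if h : IsRegularOn Φ'' l ∧ IsRegularOn Φ'' m ∧ ∃ w, w ∈ weyl Φ'' ∧ m = wAct w l
  then (-1) ^ len S h.2.2.choose else 0

/-- The Jantzen coefficient `c(λ, μ, Φ'', Φ') = Σ_{β ∈ Ψ⁺⁺(λ,Φ'',Φ')} sgn(s_β λ, μ)`. -/
def jc (S : RootSys V) (Φ'' Φ' : Set V) (l m : HStar V) : ℤ :=
  ∑ᶠ β ∈ PsiPP S Φ'' Φ' l, sgnW S Φ'' (sRefl β l) m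

/-- The symmetrized Jantzen coefficient `c̃(λ, μ, Φ'', Φ')`. -/
def jcSym (S : RootSys V) (Φ'' Φ' : Set V) (l m : HStar V) : ℤ :=
  jc S Φ'' Φ' l m + jc S Φ'' Φ' m l

/-- `θ(λ) = Σ_{w ∈ W_I} (-1)^{ℓ(w)} e^{wλ}` in the free `ℤ`-module on `h*`. -/
def theta (S : RootSys V) (I : Finset V) (l : HStar V) : HStar V →₀ ℤ :=
  ∑ᶠ w ∈ (weyl (PhiI S I) : Set (V ≃ₗ[ℝ] V)),
    Finsupp.single (wAct w l) ((-1) ^ len S w)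

/-- `Φ_λ = {α ∈ Φ : ⟨λ, α⟩ = 0}`. -/
def singSet (S : RootSys V) (l : HStar V) : Set V :=
  {α ∈ (S.Φ : Set V) | l α = 0}

/-- `Φ_{[λ]} = {α ∈ Φ : ⟨λ, α^∨⟩ ∈ ℤ}`. -/
def integralSet (S : RootSys V) (l : HStar V) : Set V :=
  {α ∈ (S.Φ : Set V) | IsInt (l (coroot α))}

/-- `(ℚ A) ∩ Φ`, the intersection of the rational span of `A` with `Φ`.
Taking `A = Φ_I ∪ {β}` gives `Φ_{β,1}`; taking `A = Φ_λ ∪ {β}` gives `Φ_{β,2}`. -/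
def ratSpanRoots (S : RootSys V) (A : Set V) : Set V :=
  {γ ∈ (S.Φ : Set V) | ∃ (t : Finset V) (c : V → ℚ),
    (t : Set V) ⊆ A ∧ γ = ∑ α ∈ t, (c α : ℝ) • α}

/-- `Φ_{β,0}`, the irreducible component of `Φ` containing `β`. -/
def component (S : RootSys V) (β : V) : Set V :=
  {γ ∈ (S.Φ : Set V) |
    Relation.ReflTransGen
      (fun x y => x ∈ (S.Φ : Set V) ∧ y ∈ (S.Φ : Set V) ∧ ⟪x, y⟫ ≠ 0) β γ}

/-- `λ|_{Φ'}`: the unique element of `ℂΦ'` with `⟨λ|_{Φ'}, α^∨⟩ = ⟨λ, α^∨⟩`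
for all `α ∈ Φ'`. -/
def restrictW (Φ' : Set V) (l : HStar V) : HStar V :=
  letI : Nonempty (HStar V) := ⟨0⟩
  Classical.epsilon fun m =>
    m ∈ Submodule.span ℂ (emb '' Φ') ∧ ∀ α ∈ Φ', m (coroot α) = l (coroot α)

/-- `ᴵWᴶ = {w ∈ W : ℓ(uwv) = ℓ(u) + ℓ(w) + ℓ(v) for all u ∈ W_I, v ∈ W_J}`. -/
def doubleCoset (S : RootSys V) (I J : Finset V) : Set (V ≃ₗ[ℝ] V) :=
  {w | w ∈ weyl (S.Φ : Set V) ∧ ∀ u ∈ weyl (PhiI S I), ∀ v ∈ weyl (PhiI S J),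
    len S (u * w * v) = len S u + len S w + len S v}

/-- The fundamental weight `ϖ_j` relative to an enumeration `e` of the simple roots:
the unique element of `h*` with `⟨ϖ_j, α_k^∨⟩ = δ_{jk}`. -/
def fundWeight {n : ℕ} (e : Fin n → V) (j : Fin n) : HStar V :=
  letI : Nonempty (HStar V) := ⟨0⟩
  Classical.epsilon fun m => ∀ k : Fin n, m (coroot (e k)) = if k = j then 1 else 0

/-- The labels of the irreducible Dynkin types. -/
inductive LieType | A | B | C | D | E | F | G
deriving DecidableEq

/-- The Cartan matrix of type `A_n` (1-based indices): entry `(i,j)` is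
`⟨α_i, α_j^∨⟩`. -/
def cartanA (i j : ℕ) : ℤ :=
  if i = j then 2 else if i + 1 = j ∨ j + 1 = i then -1 else 0

/-- The Cartan matrices of the irreducible types in the standard (Bourbaki/Humphreys)
numbering of the Dynkin diagram: `cartanEntry t n i j = ⟨α_i, α_j^∨⟩` (1-based). -/
def cartanEntry : LieType → ℕ → ℕ → ℕ → ℤ
  | .A, _, i, j => cartanA i j
  | .B, n, i, j => if i + 1 = n ∧ j = n then -2 else cartanA i j
  | .C, n, i, j => if i = n ∧ j + 1 = n then -2 else cartanA i j
  | .D, n, i, j =>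
      if i = j then 2
      else if (i + 2 = n ∧ j = n) ∨ (i = n ∧ j + 2 = n) then -1
      else if (i + 1 = n ∧ j = n) ∨ (i = n ∧ j + 1 = n) then 0
      else cartanA i j
  | .E, _, i, j =>
      if i = j then 2
      else if (i = 1 ∧ j = 3) ∨ (i = 3 ∧ j = 1) ∨ (i = 2 ∧ j = 4) ∨ (i = 4 ∧ j = 2) then -1
      else if (i = 1 ∧ j = 2) ∨ (i = 2 ∧ j = 1) ∨ (i = 2 ∧ j = 3) ∨ (i = 3 ∧ j = 2) then 0
      else cartanA i j
  | .F, _, i, j => if i = 2 ∧ j = 3 then -2 else cartanA i j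
  | .G, _, i, j => if i = 2 ∧ j = 1 then -3 else cartanA i j

/-- The standard basis vector `e_k` (1-based index, junk `0` outside `1 ≤ k ≤ n`). -/
def stdE (n k : ℕ) : EuclideanSpace ℝ (Fin n) :=
  if h : 1 ≤ k ∧ k ≤ n then EuclideanSpace.single ⟨k - 1, by omega⟩ 1 else 0

/-- The labels `B`, `C`, `D` of the classical non-`A` types. -/
inductive BCD | B | C | D
deriving DecidableEq

/-- The root set of `B_n` / `C_n` / `D_n` in the standard realization. -/
def bcdRoots (t : BCD) (n : ℕ) : Set (EuclideanSpace ℝ (Fin n)) :=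
  {v | (∃ i j : ℕ, 1 ≤ i ∧ i < j ∧ j ≤ n ∧
          (v = stdE n i - stdE n j ∨ v = -(stdE n i - stdE n j) ∨
           v = stdE n i + stdE n j ∨ v = -(stdE n i + stdE n j))) ∨
       (match t with
        | .B => ∃ i : ℕ, 1 ≤ i ∧ i ≤ n ∧ (v = stdE n i ∨ v = -stdE n i)
        | .C => ∃ i : ℕ, 1 ≤ i ∧ i ≤ n ∧ (v = (2:ℝ) • stdE n i ∨ v = -((2:ℝ) • stdE n i))
        | .D => False)}

/-- The positive roots of `B_n` / `C_n` / `D_n` in the standard realization. -/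
def bcdPos (t : BCD) (n : ℕ) : Set (EuclideanSpace ℝ (Fin n)) :=
  {v | (∃ i j : ℕ, 1 ≤ i ∧ i < j ∧ j ≤ n ∧
          (v = stdE n i - stdE n j ∨ v = stdE n i + stdE n j)) ∨
       (match t with
        | .B => ∃ i : ℕ, 1 ≤ i ∧ i ≤ n ∧ v = stdE n i
        | .C => ∃ i : ℕ, 1 ≤ i ∧ i ≤ n ∧ v = (2:ℝ) • stdE n i
        | .D => False)}

/-- The simple roots of `B_n` / `C_n` / `D_n` in the standard realization. -/
def bcdSimple (t : BCD) (n : ℕ) : Set (EuclideanSpace ℝ (Fin n)) :=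
  {v | (∃ i : ℕ, 1 ≤ i ∧ i < n ∧ v = stdE n i - stdE n (i + 1)) ∨
       (match t with
        | .B => v = stdE n n
        | .C => v = (2:ℝ) • stdE n n
        | .D => v = stdE n (n - 1) + stdE n n)}

/-- The simple root `α_k` of `B_n` / `C_n` / `D_n` (1-based index `k`). -/
def bcdAlpha (t : BCD) (n k : ℕ) : EuclideanSpace ℝ (Fin n) :=
  if k < n then stdE n k - stdE n (k + 1)
  else match t with
  | .B => stdE n n
  | .C => (2:ℝ) • stdE n n
  | .D => stdE n (n - 1) + stdE n n


/-!
For any `α`, the weight `s_γ λ` pairs with `α` as `λ` pairs with `s_γ α`. If a root `α` makes this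
pairing vanish, then `s_γ α` lies in `Φ_λ`, hence in every subsystem `Φ'` containing `Φ_λ`; when
`γ ∈ Φ'`, so does `α = s_γ (s_γ α)`. Thus regularity of `s_γ λ` can only fail at roots of `Φ'`, and
there `λ` and `λ|_{Φ'}` have the same pairings.
-/

section

omit [FiniteDimensional ℝ V]

lemma apply_coroot_eq_iff {l m : HStar V} {α : V} :
    l (coroot α) = m (coroot α) ↔ l α = m α := by
  rcases eq_or_ne α 0 with rfl | hα
  · simp only [coroot, smul_zero, map_zero]
  · have hne : 2 / ⟪α, α⟫ ≠ 0 := div_ne_zero two_ne_zero (inner_self_ne_zero.2 hα)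
    rw [coroot, map_smul, map_smul, smul_right_inj hne]

lemma isLinearMap_emb : IsLinearMap ℝ (emb : V → HStar V) where
  map_add x y := by ext v; simp [emb, inner_add_left]
  map_smul a x := by ext v; simp [emb, real_inner_smul_left]

lemma emb_mem_span {A : Set V} {u : V} (hu : u ∈ Submodule.span ℝ A) :
    emb u ∈ Submodule.span ℂ (emb '' A) := by
  have hle : Submodule.span ℝ A ≤
      ((Submodule.span ℂ (emb '' A)).restrictScalars ℝ).comap isLinearMap_emb.mk' :=
    Submodule.span_le.2 fun x hx => Submodule.subset_span (Set.mem_image_of_mem emb hx)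
  exact hle hu

lemma sum_smul_emb_apply {ι : Type*} [Fintype ι] {U : Submodule ℝ V}
    (b : OrthonormalBasis ι ℝ U) (l : HStar V) {x : V} (hx : x ∈ U) :
    (∑ i, l (b i) • emb (b i : V)) x = l x := by
  have hsum : ∑ i, ⟪(b i : V), x⟫ • (b i : V) = x := by
    simpa only [Submodule.coe_sum, Submodule.coe_smul, Submodule.coe_inner]
      using congrArg Subtype.val (b.sum_repr' ⟨x, hx⟩)
  conv_rhs => rw [← hsum]
  simp [emb, mul_comm]

end

lemma exists_mem_span_emb_eqOn (A : Set V) (l : HStar V) :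
    ∃ m ∈ Submodule.span ℂ (emb '' A), Set.EqOn m l (Submodule.span ℝ A) :=
  let b := stdOrthonormalBasis ℝ (Submodule.span ℝ A)
  ⟨∑ i, l (b i) • emb (b i : V),
    Submodule.sum_mem _ fun i _ => Submodule.smul_mem _ _ (emb_mem_span (b i).2),
    fun _ hx => sum_smul_emb_apply b l hx⟩

lemma restrictW_coroot {A : Set V} (l : HStar V) {α : V} (hα : α ∈ A) :
    restrictW A l (coroot α) = l (coroot α) := by
  have hex : ∃ m : HStar V, m ∈ Submodule.span ℂ (emb '' A) ∧
      ∀ α ∈ A, m (coroot α) = l (coroot α) := by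
    obtain ⟨m, hm, hml⟩ := exists_mem_span_emb_eqOn A l
    exact ⟨m, hm, fun α hα => hml (Submodule.smul_mem _ _ (Submodule.subset_span hα))⟩
  exact (Classical.epsilon_spec hex).2 α hα

lemma restrictW_apply {A : Set V} (l : HStar V) {α : V} (hα : α ∈ A) :
    restrictW A l α = l α :=
  apply_coroot_eq_iff.1 (restrictW_coroot l hα)

lemma sRefl_restrictW_apply {A : Set V} (l : HStar V) {γ α : V} (hγ : γ ∈ A) (hα : α ∈ A) :
    sRefl γ (restrictW A l) α = sRefl γ l α := by
  simp only [sRefl, LinearMap.sub_apply, LinearMap.smul_apply, restrictW_coroot l hγ,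
    restrictW_apply l hα]

lemma reflV_apply (γ v : V) : reflV γ v = v - ⟪v, coroot γ⟫ • γ := by
  by_cases hγ : ⟪γ, γ⟫ = 0
  · simp [reflV, inner_self_eq_zero.1 hγ]
  · rw [reflV, dif_neg hγ, Module.reflection_apply]
    rfl

lemma reflV_reflV (γ v : V) : reflV γ (reflV γ v) = v := by
  by_cases hγ : ⟪γ, γ⟫ = 0
  · simp only [reflV, dif_pos hγ, LinearEquiv.refl_apply]
  · simpa only [reflV, dif_neg hγ] using
      Module.involutive_reflection (corootForm_self hγ) v

lemma sRefl_apply (γ : V) (l : HStar V) (v : V) : sRefl γ l v = l (reflV γ v) := by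
  have hpair : l (coroot γ) * (⟪γ, v⟫ : ℝ) = ⟪v, coroot γ⟫ • l γ := by
    simp only [coroot, map_smul, real_inner_smul_right, real_inner_comm γ v, Complex.real_smul,
      Complex.ofReal_mul]
    ring
  rw [reflV_apply, map_sub, map_smul, ← hpair]
  rfl

lemma mem_ratSpanRoots_iff [Module ℚ V] {S : RootSys V} {A : Set V} {γ : V} :
    γ ∈ ratSpanRoots S A ↔ γ ∈ (S.Φ : Set V) ∧ γ ∈ Submodule.span ℚ A := by
  refine and_congr_right fun _ => ?_
  simp only [Rat.cast_smul_eq_qsmul]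
  constructor
  · rintro ⟨t, c, htA, rfl⟩
    exact Submodule.sum_mem _ fun α hα =>
      Submodule.smul_mem _ _ (Submodule.subset_span (htA hα))
  · intro hγ
    obtain ⟨c, t, htA, -, hsum⟩ := Submodule.mem_span_iff_exists_finset_subset.1 hγ
    exact ⟨t, c, htA, hsum.symm⟩

lemma inter_subset_ratSpanRoots (S : RootSys V) (A : Set V) :
    (S.Φ : Set V) ∩ A ⊆ ratSpanRoots S A := by
  let _ : Module ℚ V := Module.compHom V (algebraMap ℚ ℝ)
  exact fun _ hα => mem_ratSpanRoots_iff.2 ⟨hα.1, Submodule.subset_span hα.2⟩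

lemma isSubsystem_ratSpanRoots (S : RootSys V) (A : Set V) :
    IsSubsystem S (ratSpanRoots S A) := by
  let _ : Module ℚ V := Module.compHom V (algebraMap ℚ ℝ)
  refine ⟨Set.sep_subset _ _, fun γ hγ α hα => ?_⟩
  rw [mem_ratSpanRoots_iff] at hγ hα ⊢
  obtain ⟨n, hn⟩ := S.crystallographic γ hγ.1 α hα.1
  refine ⟨S.refl_mem γ hγ.1 α hα.1, ?_⟩
  rw [reflV_apply, hn, Int.cast_smul_eq_zsmul]
  exact sub_mem hα.2 (zsmul_mem hγ.2 n)

lemma mem_of_sRefl_apply_eq_zero {S : RootSys V} {Φ' : Set V} (hΦ' : IsSubsystem S Φ')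
    {l : HStar V} (hl : singSet S l ⊆ Φ') {γ α : V} (hγ : γ ∈ Φ') (hα : α ∈ (S.Φ : Set V))
    (h : sRefl γ l α = 0) : α ∈ Φ' := by
  rw [sRefl_apply] at h
  have hmem : reflV γ α ∈ Φ' := hl ⟨S.refl_mem γ (hΦ'.1 hγ) α hα, h⟩
  simpa only [reflV_reflV] using hΦ'.2 γ hγ _ hmem

theorem statement_2_general {S : RootSys V} {Φ' Ψ : Set V} (hΦ' : IsSubsystem S Φ')
    (hΨ : Ψ ⊆ (S.Φ : Set V)) {l : HStar V} (hl : singSet S l ⊆ Φ') {γ : V} (hγ : γ ∈ Φ') :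
    IsRegularOn Ψ (sRefl γ l) ↔ IsRegularOn (Ψ ∩ Φ') (sRefl γ (restrictW Φ' l)) := by
  constructor
  · rintro hreg α ⟨hαΨ, hαΦ'⟩
    rw [sRefl_restrictW_apply l hγ hαΦ']
    exact hreg α hαΨ
  · intro hreg α hα h
    have hαΦ' : α ∈ Φ' := mem_of_sRefl_apply_eq_zero hΦ' hl hγ (hΨ hα) h
    exact hreg α ⟨hα, hαΦ'⟩ ((sRefl_restrictW_apply l hγ hαΦ').trans h)

/-- Lemma 3.10: for `λ ∈ Λ_I⁺`, `β ∈ Φ \ Φ_λ` and `γ ∈ Φ_{β,2}`, the weight `s_γ λ` is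
`Φ_I`-regular iff `s_γ (λ|_{Φ_{β,2}})` is `(Φ_I ∩ Φ_{β,2})`-regular. -/
theorem statement_2 {V : Type*} [NormedAddCommGroup V] [InnerProductSpace ℝ V]
    [FiniteDimensional ℝ V]
    (S : RootSys V) (I : Finset V) (hI : I ⊆ S.Δ)
    (lam : HStar V) (hlam : lam ∈ LambdaP (I : Set V))
    (β : V) (hβΦ : β ∈ (S.Φ : Set V)) (hβ : β ∉ singSet S lam)
    (γ : V) (hγ : γ ∈ ratSpanRoots S (singSet S lam ∪ {β})) :
    IsRegularOn (PhiI S I) (sRefl γ lam) ↔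
      IsRegularOn (PhiI S I ∩ ratSpanRoots S (singSet S lam ∪ {β}))
        (sRefl γ (restrictW (ratSpanRoots S (singSet S lam ∪ {β})) lam)) :=
  statement_2_general (isSubsystem_ratSpanRoots S _) (Set.sep_subset _ _)
    (fun _ hα => inter_subset_ratSpanRoots S _ ⟨hα.1, Or.inl hα⟩) hγ

end JantzenGVM
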